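/- Let k ∈ {0,1} and f, g ∈ ℓ^{2,k}(ℤ^d). Then for each of the nonlinearities N(u) = |∂_t u|² and N(u) = |∂_j u|² (for a fixed j ∈ {1,…,d}), there exists T > 0 and a unique u ∈ C²([0,T]; ℓ^{2,k}(ℤ^d)) solving ∂_t² u(x,t) − Δu(x,t) = N(u)(x,t) on ℤ^d × [0,T] with u(·,0) = f and ∂_t u(·,0) = g. -/

import Mathlib

open scoped BigOperators ENNReal NNReal
open MeasureTheory Filter

noncomputable section

/-- Kernel `φⱼ` of the discrete partial derivative on `ℤ^d`:
`φⱼ(m) = -4i/(π(4a²-1))` if `m = a·eⱼ`, and `0` otherwise. -/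
def phi (d : ℕ) (j : Fin d) (m : Fin d → ℤ) : ℂ :=
  if ∀ i, i ≠ j → m i = 0 then
    (-4 * Complex.I) / ((Real.pi : ℂ) * (4 * (m j : ℂ) ^ 2 - 1))
  else 0

/-- Discrete convolution on `ℤ^d`. -/
def dconv {d : ℕ} (u v : (Fin d → ℤ) → ℂ) (k : Fin d → ℤ) : ℂ :=
  ∑' m, u m * v (k - m)

/-- Discrete partial derivative `∂ⱼ u = u ∗ φⱼ`. -/
def pd {d : ℕ} (j : Fin d) (u : (Fin d → ℤ) → ℂ) : (Fin d → ℤ) → ℂ :=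
  dconv u (phi d j)

/-- Japanese bracket `⟨m⟩ = (1+|m|²)^{1/2}`. -/
def jap {d : ℕ} (m : Fin d → ℤ) : ℝ :=
  Real.sqrt (1 + ∑ i, ((m i : ℝ)) ^ 2)

open scoped Classical in
/-- `ℓ^p` norm on `ℤ^d` (valued in `ℝ≥0∞`), `1 ≤ p ≤ ∞`. -/
def lpn {d : ℕ} (p : ℝ≥0∞) (f : (Fin d → ℤ) → ℂ) : ℝ≥0∞ :=
  if p = ⊤ then ⨆ m, (‖f m‖₊ : ℝ≥0∞)
  else (∑' m, (‖f m‖₊ : ℝ≥0∞) ^ p.toReal) ^ (1 / p.toReal)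

/-- Weighted `ℓ^{2,k}` norm: the `ℓ²` norm of `m ↦ ⟨m⟩^k f(m)`. -/
def w2 {d : ℕ} (k : ℕ) (f : (Fin d → ℤ) → ℂ) : ℝ≥0∞ :=
  lpn 2 (fun m => ((jap m ^ k : ℝ) : ℂ) * f m)

/-- Discrete Laplacian on `ℤ^d`. -/
def lap {d : ℕ} (u : (Fin d → ℤ) → ℂ) (x : Fin d → ℤ) : ℂ :=
  ∑ j, (u (x + Pi.single j 1) + u (x - Pi.single j 1) - 2 * u x)

/-- Continuity of a curve `t ↦ f(·,t)` into `ℓ^{2,k}(ℤ^d)` on a set `S` of times. -/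
def ContW {d : ℕ} (k : ℕ) (S : Set ℝ) (f : ℝ → (Fin d → ℤ) → ℂ) : Prop :=
  ∀ t ∈ S, Tendsto (fun s => w2 k (fun m => f s m - f t m))
    (nhdsWithin t S) (nhds (0 : ℝ≥0∞))

/-- `f'` is the derivative (in the `ℓ^{2,k}(ℤ^d)` norm) of the curve `t ↦ f(·,t)` on `S`. -/
def DerivW {d : ℕ} (k : ℕ) (S : Set ℝ) (f f' : ℝ → (Fin d → ℤ) → ℂ) : Prop :=
  ∀ t ∈ S, Tendsto
    (fun s => w2 k (fun m => (s - t)⁻¹ • (f s m - f t m) - f' t m))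
    (nhdsWithin t (S \ {t})) (nhds (0 : ℝ≥0∞))

/-- `u ∈ C²(S; ℓ^{2,k}(ℤ^d))`, with first and second time derivatives `u1`, `u2`. -/
structure IsC2 {d : ℕ} (k : ℕ) (S : Set ℝ) (u u1 u2 : ℝ → (Fin d → ℤ) → ℂ) : Prop where
  mem0 : ∀ t ∈ S, w2 k (u t) < ⊤
  mem1 : ∀ t ∈ S, w2 k (u1 t) < ⊤
  mem2 : ∀ t ∈ S, w2 k (u2 t) < ⊤
  cont0 : ContW k S u
  cont1 : ContW k S u1
  cont2 : ContW k S u2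
  hder1 : DerivW k S u u1
  hder2 : DerivW k S u1 u2

/-- Classical solution in `C²(S; ℓ^{2,k}(ℤ^d))` of `∂ₜ²u - Δu = |∂ₜu|²`
with data `u(·,0)=f`, `∂ₜu(·,0)=g`. -/
def SolQt (d k : ℕ) (f g : (Fin d → ℤ) → ℂ)
    (S : Set ℝ) (u u1 u2 : ℝ → (Fin d → ℤ) → ℂ) : Prop :=
  IsC2 k S u u1 u2 ∧
    (∀ t ∈ S, ∀ x, u2 t x - lap (u t) x = ((‖u1 t x‖ ^ 2 : ℝ) : ℂ)) ∧
    (∀ x, u 0 x = f x) ∧ (∀ x, u1 0 x = g x)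

/-- Classical solution in `C²(S; ℓ^{2,k}(ℤ^d))` of `∂ₜ²u - Δu = |∂ⱼu|²`
with data `u(·,0)=f`, `∂ₜu(·,0)=g`. -/
def SolQj (d k : ℕ) (j : Fin d) (f g : (Fin d → ℤ) → ℂ)
    (S : Set ℝ) (u u1 u2 : ℝ → (Fin d → ℤ) → ℂ) : Prop :=
  IsC2 k S u u1 u2 ∧
    (∀ t ∈ S, ∀ x, u2 t x - lap (u t) x = ((‖pd j (u t) x‖ ^ 2 : ℝ) : ℂ)) ∧
    (∀ x, u 0 x = f x) ∧ (∀ x, u1 0 x = g x)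

/-!
Multiplication by a weight identifies `ℓ^{2,k}` with `ℓ²`, and on the lattice `Δ` is a bounded
operator, so the wave equation is an ordinary differential equation in `ℓ² × ℓ²`, to which the
Picard-Lindelöf theorem applies once the nonlinearity is locally Lipschitz. Since
`⟨x⟩^k |v|² = |⟨x⟩^{k/2} v|²` and the product of two `ℓ²` functions is in `ℓ²`, the square `|v|²`
costs only half of the weight: it suffices that `∂ⱼ` maps `ℓ^{2,k}` to `ℓ^{2,k/2}`. The kernel
decays like `|φⱼ(a eⱼ)| ≲ ⟨a⟩⁻²`, which is summable against `⟨a⟩^{k/2}` for `k ≤ 1`, while for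
`k = 1` it is not summable against the full weight `⟨a⟩^k`.
-/

section ODE

variable {E : Type*} [NormedAddCommGroup E] [NormedSpace ℝ E] {F : E → E}

theorem exists_isIntegralCurveOn_Icc_of_locallyLipschitz [CompleteSpace E]
    (hF : LocallyLipschitz F) (x₀ : E) :
    ∃ T : ℝ, 0 < T ∧ ∃ γ : ℝ → E, γ 0 = x₀ ∧
      IsIntegralCurveOn γ (fun _ => F) (Set.Icc 0 T) := by
  obtain ⟨K, s, hs, hK⟩ := hF x₀
  obtain ⟨a, ha, has⟩ := Metric.nhds_basis_closedBall.mem_iff.1 hs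
  lift a to ℝ≥0 using ha.le
  have hKa : LipschitzOnWith K F (Metric.closedBall x₀ a) := hK.mono has
  set L : ℝ≥0 := K * a + ‖F x₀‖₊ + 1 with hL
  have hL0 : (0 : ℝ) < L := by positivity
  have hbound : ∀ x ∈ Metric.closedBall x₀ (a : ℝ), ‖F x‖ ≤ L := fun x hx =>
    calc ‖F x‖ ≤ ‖F x - F x₀‖ + ‖F x₀‖ := norm_le_norm_sub_add _ _
      _ ≤ K * ‖x - x₀‖ + ‖F x₀‖ := by
        gcongr; exact hKa.norm_sub_le hx (Metric.mem_closedBall_self ha.le)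
      _ ≤ K * a + ‖F x₀‖ := by gcongr; exact mem_closedBall_iff_norm.1 hx
      _ ≤ L := by simp [hL]
  have hT : (0 : ℝ) < a / L := div_pos ha hL0
  have htime : (L : ℝ) * max ((a : ℝ) / L - 0) (0 - 0) ≤ a - (0 : ℝ≥0) := by
    simp [max_eq_left hT.le, mul_div_cancel₀ _ hL0.ne']
  have hpicard : IsPicardLindelof (fun _ => F) (⟨0, le_rfl, hT.le⟩ : Set.Icc (0 : ℝ) (a / L))
      x₀ a 0 L K :=
    .of_time_independent hbound hKa htime
  exact ⟨a / L, hT, hpicard.exists_eq_forall_mem_Icc_hasDerivWithinAt₀⟩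

variable {γ α β : ℝ → E} {a b : ℝ}

theorem hasDerivWithinAt_Ici_of_isIntegralCurveOn_Icc
    (hγ : IsIntegralCurveOn γ (fun _ => F) (Set.Icc a b)) {t : ℝ} (ht : t ∈ Set.Ico a b) :
    HasDerivWithinAt γ (F (γ t)) (Set.Ici t) t :=
  (hγ t ⟨ht.1, ht.2.le⟩).mono_of_mem_nhdsWithin <|
    mem_of_superset (Icc_mem_nhdsGE ht.2) (Set.Icc_subset_Icc_left ht.1)

theorem eqOn_Icc_of_isIntegralCurveOn_of_locallyLipschitz (hF : LocallyLipschitz F)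
    (hα : IsIntegralCurveOn α (fun _ => F) (Set.Icc a b))
    (hβ : IsIntegralCurveOn β (fun _ => F) (Set.Icc a b)) (h : α a = β a) :
    Set.EqOn α β (Set.Icc a b) := by
  have hclosed : IsClosed ({t | α t = β t} ∩ Set.Icc a b) := by
    rw [Set.inter_comm]
    exact (hα.continuousOn.prodMk hβ.continuousOn).preimage_isClosed_of_isClosed
      isClosed_Icc isClosed_diagonal
  refine hclosed.Icc_subset_of_forall_mem_nhdsWithin h fun t ⟨heq, ht⟩ => ?_
  obtain ⟨K, s, hs, hK⟩ := hF (α t)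
  have hαs : α ⁻¹' s ∈ nhdsWithin t (Set.Ici t) :=
    (hasDerivWithinAt_Ici_of_isIntegralCurveOn_Icc hα ht).continuousWithinAt hs
  have hβs : β ⁻¹' s ∈ nhdsWithin t (Set.Ici t) :=
    (hasDerivWithinAt_Ici_of_isIntegralCurveOn_Icc hβ ht).continuousWithinAt (heq ▸ hs)
  obtain ⟨c, htc, hc⟩ := mem_nhdsGE_iff_exists_Icc_subset.1
    (inter_mem (Icc_mem_nhdsGE ht.2) (inter_mem hαs hβs))
  have hsub : Set.Icc t c ⊆ Set.Icc a b :=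
    fun r hr => Set.Icc_subset_Icc_left ht.1 (hc hr).1
  have heqOn : Set.EqOn α β (Set.Icc t c) :=
    ODE_solution_unique_of_mem_Icc_right (s := fun _ => s) (fun _ _ => hK)
      (hα.continuousOn.mono hsub)
      (fun _ => hasDerivWithinAt_Ici_of_isIntegralCurveOn_Icc (hα.mono hsub))
      (fun r hr => (hc ⟨hr.1, hr.2.le⟩).2.1)
      (hβ.continuousOn.mono hsub)
      (fun _ => hasDerivWithinAt_Ici_of_isIntegralCurveOn_Icc (hβ.mono hsub))
      (fun r hr => (hc ⟨hr.1, hr.2.le⟩).2.2) heq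
  exact mem_of_superset (Icc_mem_nhdsGT htc) heqOn

end ODE

section SquareSummable

/-- The Hilbert space `ℓ²(ι)` of square-summable complex functions on `ι`. -/
abbrev L2 (ι : Type*) : Type _ := lp (fun _ : ι => ℂ) 2

variable {ι κ : Type*}

theorem sum_sq_norm_le_of_norm_le_comp {U : L2 κ} {e : ι → κ} (he : e.Injective)
    {f : ι → ℂ} {C : ℝ} (h : ∀ x, ‖f x‖ ≤ C * ‖U (e x)‖) (s : Finset ι) :
    ∑ x ∈ s, ‖f x‖ ^ 2 ≤ (C * ‖U‖) ^ 2 := by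
  have hU : ∑ x ∈ s, ‖U (e x)‖ ^ 2 ≤ ‖U‖ ^ 2 := by
    simpa using lp.sum_rpow_le_norm_rpow (p := 2) (by norm_num) U (s.map ⟨e, he⟩)
  calc ∑ x ∈ s, ‖f x‖ ^ 2 ≤ ∑ x ∈ s, (C * ‖U (e x)‖) ^ 2 := by gcongr with x; exact h x
    _ = C ^ 2 * ∑ x ∈ s, ‖U (e x)‖ ^ 2 := by simp only [mul_pow, Finset.mul_sum]
    _ ≤ (C * ‖U‖) ^ 2 := by rw [mul_pow]; gcongr

theorem memℓp_two_of_norm_le_comp {U : L2 κ} {e : ι → κ} (he : e.Injective)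
    {f : ι → ℂ} {C : ℝ} (h : ∀ x, ‖f x‖ ≤ C * ‖U (e x)‖) : Memℓp f 2 :=
  memℓp_gen' (C := (C * ‖U‖) ^ 2) fun s => by
    simpa using sum_sq_norm_le_of_norm_le_comp he h s

theorem norm_le_of_norm_apply_le_comp {U : L2 κ} {V : L2 ι} {e : ι → κ} (he : e.Injective)
    {C : ℝ} (hC : 0 ≤ C) (h : ∀ x, ‖V x‖ ≤ C * ‖U (e x)‖) : ‖V‖ ≤ C * ‖U‖ :=
  lp.norm_le_of_forall_sum_le (by norm_num) (by positivity) fun s => by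
    simpa using sum_sq_norm_le_of_norm_le_comp he h s

/-- The pointwise square `|Z|²` of `Z ∈ ℓ²`, again in `ℓ²` because `ℓ² ⊆ ℓ^∞`. -/
def normSq (Z : L2 ι) : L2 ι :=
  ⟨fun x => ((‖Z x‖ ^ 2 : ℝ) : ℂ), memℓp_two_of_norm_le_comp (C := ‖Z‖) Function.injective_id
    fun x => by
      rw [Complex.norm_real, Real.norm_of_nonneg (by positivity), sq]
      exact mul_le_mul_of_nonneg_right (lp.norm_apply_le_norm two_ne_zero Z x) (norm_nonneg _)⟩

theorem normSq_apply (Z : L2 ι) (x : ι) : normSq Z x = ((‖Z x‖ ^ 2 : ℝ) : ℂ) := rfl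

theorem norm_normSq_sub_le (Y Z : L2 ι) : ‖normSq Y - normSq Z‖ ≤ (‖Y‖ + ‖Z‖) * ‖Y - Z‖ := by
  refine norm_le_of_norm_apply_le_comp Function.injective_id (by positivity) fun x => ?_
  calc ‖(normSq Y - normSq Z) x‖
      = |‖Y x‖ ^ 2 - ‖Z x‖ ^ 2| := by
        rw [lp.coeFn_sub, Pi.sub_apply, normSq_apply, normSq_apply, ← Complex.ofReal_sub,
          Complex.norm_real, Real.norm_eq_abs]
    _ = (‖Y x‖ + ‖Z x‖) * |‖Y x‖ - ‖Z x‖| := by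
        rw [sq_sub_sq, abs_mul, abs_of_nonneg (by positivity)]
    _ ≤ (‖Y‖ + ‖Z‖) * ‖Y x - Z x‖ := by
        gcongr
        · exact lp.norm_apply_le_norm two_ne_zero Y x
        · exact lp.norm_apply_le_norm two_ne_zero Z x
        · exact abs_norm_sub_norm_le _ _

theorem locallyLipschitz_normSq : LocallyLipschitz (normSq : L2 ι → L2 ι) := fun Z => by
  refine ⟨2 * (‖Z‖₊ + 1), Metric.ball Z 1, Metric.ball_mem_nhds Z one_pos,
    LipschitzOnWith.of_dist_le_mul fun X hX Y hY => ?_⟩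
  have hnorm : ∀ W ∈ Metric.ball Z 1, ‖W‖ ≤ ‖Z‖ + 1 := fun W hW => by
    linarith [norm_le_norm_add_norm_sub Z W, mem_ball_iff_norm'.1 hW]
  calc dist (normSq X) (normSq Y) ≤ (‖X‖ + ‖Y‖) * dist X Y := by
        simpa only [dist_eq_norm] using norm_normSq_sub_le X Y
    _ ≤ ((‖Z‖ + 1) + (‖Z‖ + 1)) * dist X Y := by
        gcongr
        exacts [hnorm X hX, hnorm Y hY]
    _ = (2 * (‖Z‖₊ + 1) : ℝ≥0) * dist X Y := by push_cast; ring

end SquareSummable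

section WeightedSpaces

variable {ι κ τ : Type*}

/-- For a positive weight `w`, the isometry `U ↦ U / w` of `ℓ²` onto the weighted space
`ℓ²(w) = {f | w f ∈ ℓ²}`, whose elements are thus the functions in the range of `unweight w`. -/
def unweight (w : ι → ℝ) : L2 ι →ₗ[ℂ] ι → ℂ where
  toFun U x := U x / w x
  map_add' U V := funext fun x => add_div (U x) (V x) (w x : ℂ)
  map_smul' c U := funext fun x => mul_div_assoc c (U x) (w x : ℂ)

theorem unweight_apply (w : ι → ℝ) (U : L2 ι) (x : ι) : unweight w U x = U x / w x := rfl

theorem mul_unweight_apply {w : ι → ℝ} (hw : ∀ x, 0 < w x) (U : L2 ι) (x : ι) :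
    (w x : ℂ) * unweight w U x = U x :=
  mul_div_cancel₀ _ (Complex.ofReal_ne_zero.2 (hw x).ne')

theorem unweight_injective {w : ι → ℝ} (hw : ∀ x, 0 < w x) :
    Function.Injective (unweight w) := fun U V h => by
  ext x
  rw [← mul_unweight_apply hw U, h, mul_unweight_apply hw]

/-- `T` maps `ℓ²(w)` linearly into `ℓ²(v)` with norm at most `C`. -/
def WeightedBound (w : κ → ℝ) (v : ι → ℝ) (C : ℝ) (T : (κ → ℂ) → ι → ℂ) : Prop :=
  ∃ A : L2 κ →L[ℂ] L2 ι, ‖A‖ ≤ C ∧ ∀ U, unweight v (A U) = T (unweight w U)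

namespace WeightedBound

variable {w : κ → ℝ} {v : ι → ℝ} {C D : ℝ} {S T : (κ → ℂ) → ι → ℂ}

theorem congr (hS : WeightedBound w v C S) (h : ∀ u x, S u x = T u x) : WeightedBound w v C T :=
  (funext₂ h : S = T) ▸ hS

theorem comp_injective (hw : ∀ x, 0 < w x) (hv : ∀ x, 0 < v x) {e : ι → κ} (he : e.Injective)
    (hC : 0 ≤ C) (h : ∀ x, v x ≤ C * w (e x)) : WeightedBound w v C fun u => u ∘ e := by
  have hbound (U : L2 κ) (x : ι) : ‖(v x : ℂ) * unweight w U (e x)‖ ≤ C * ‖U (e x)‖ := by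
    rw [unweight_apply, norm_mul, norm_div, Complex.norm_real, Complex.norm_real,
      Real.norm_of_nonneg (hv x).le, Real.norm_of_nonneg (hw _).le, ← mul_div_assoc,
      div_le_iff₀ (hw _), mul_right_comm]
    gcongr
    exact h x
  let A : L2 κ →ₗ[ℂ] L2 ι :=
    { toFun U := ⟨fun x => v x * unweight w U (e x), memℓp_two_of_norm_le_comp he (hbound U)⟩
      map_add' U V := by
        ext x
        exact (congrArg _ (congrFun (map_add (unweight w) U V) (e x))).trans (mul_add _ _ _)
      map_smul' c U := by
        ext x
        exact (congrArg _ (congrFun (map_smul (unweight w) c U) (e x))).trans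
          (mul_left_comm _ _ _) }
  refine ⟨A.mkContinuous C fun U => norm_le_of_norm_apply_le_comp he hC (hbound U),
    A.mkContinuous_norm_le hC _, fun U => funext fun x => ?_⟩
  exact mul_div_cancel_left₀ _ (Complex.ofReal_ne_zero.2 (hv x).ne')

theorem const_smul (hT : WeightedBound w v C T) (c : ℂ) :
    WeightedBound w v (‖c‖ * C) fun u => c • T u := by
  obtain ⟨A, hA, hAT⟩ := hT
  refine ⟨c • A, (norm_smul_le c A).trans (by gcongr), fun U => ?_⟩
  rw [smul_apply, map_smul, hAT]

theorem add (hS : WeightedBound w v C S) (hT : WeightedBound w v D T) :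
    WeightedBound w v (C + D) fun u => S u + T u := by
  obtain ⟨A, hA, hAS⟩ := hS
  obtain ⟨B, hB, hBT⟩ := hT
  refine ⟨A + B, norm_add_le_of_le hA hB, fun U => ?_⟩
  rw [add_apply, map_add, hAS, hBT]

theorem tsum {T : τ → (κ → ℂ) → ι → ℂ} {C : τ → ℝ} (hT : ∀ m, WeightedBound w v (C m) (T m))
    (hC : Summable C) : WeightedBound w v (∑' m, C m) fun u x => ∑' m, T m u x := by
  choose A hA hAT using hT
  have hsum : Summable A := .of_norm_bounded hC hA
  refine ⟨∑' m, A m, tsum_of_norm_bounded hC.hasSum hA, fun U => funext fun x => ?_⟩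
  let ev : (L2 κ →L[ℂ] L2 ι) →L[ℂ] ℂ :=
    (lp.evalCLM ℂ (fun _ : ι => ℂ) 2 x).comp (ContinuousLinearMap.apply ℂ (L2 ι) U)
  have hev : (∑' m, A m) U x = ∑' m, A m U x := ev.map_tsum hsum
  rw [unweight_apply, hev, ← tsum_div_const]
  exact tsum_congr fun m => congrFun (hAT m U) x

theorem exists_locallyLipschitz_norm_sq (hT : WeightedBound w v C T) {w' : ι → ℝ}
    (hv : ∀ x, v x ^ 2 = w' x) :
    ∃ Q : L2 κ → L2 ι, LocallyLipschitz Q ∧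
      ∀ U, unweight w' (Q U) = fun x => ((‖T (unweight w U) x‖ ^ 2 : ℝ) : ℂ) := by
  obtain ⟨A, -, hAT⟩ := hT
  refine ⟨normSq ∘ A, locallyLipschitz_normSq.comp A.lipschitz.locallyLipschitz,
    fun U => funext fun x => ?_⟩
  rw [← hAT, unweight_apply, unweight_apply, Function.comp_apply, normSq_apply, norm_div, div_pow,
    Complex.norm_real, Real.norm_eq_abs, sq_abs, hv, Complex.ofReal_div]

end WeightedBound

end WeightedSpaces

section JapaneseBracket

variable {d : ℕ}

theorem jap_sq (x : Fin d → ℤ) : jap x ^ 2 = 1 + ∑ i, (x i : ℝ) ^ 2 :=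
  Real.sq_sqrt (by positivity)

theorem one_le_jap (x : Fin d → ℤ) : 1 ≤ jap x :=
  Real.one_le_sqrt.2 (le_add_of_nonneg_right (by positivity))

theorem jap_add_le (x y : Fin d → ℤ) : jap (x + y) ≤ 2 * jap x * jap y := by
  have hsum : ∑ i, ((x + y) i : ℝ) ^ 2 ≤ 2 * (∑ i, (x i : ℝ) ^ 2 + ∑ i, (y i : ℝ) ^ 2) := by
    rw [← Finset.sum_add_distrib, Finset.mul_sum]
    gcongr with i
    push_cast [Pi.add_apply]
    exact add_sq_le
  have hx : 0 ≤ ∑ i, (x i : ℝ) ^ 2 := by positivity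
  have hy : 0 ≤ ∑ i, (y i : ℝ) ^ 2 := by positivity
  have hxy := mul_nonneg hx hy
  have hx1 := one_le_jap x
  have hy1 := one_le_jap y
  refine Real.sqrt_le_iff.2 ⟨by positivity, ?_⟩
  rw [mul_pow, mul_pow, jap_sq, jap_sq]
  linarith

/-- The weight `⟨m⟩^s` with a real exponent `s`. -/
def japPow (s : ℝ) (m : Fin d → ℤ) : ℝ := jap m ^ s

theorem japPow_pos (s : ℝ) (m : Fin d → ℤ) : 0 < japPow s m :=
  Real.rpow_pos_of_pos (one_pos.trans_le (one_le_jap m)) s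

theorem japPow_natCast (k : ℕ) (m : Fin d → ℤ) : japPow (k : ℝ) m = jap m ^ k :=
  Real.rpow_natCast _ _

theorem japPow_add (s t : ℝ) (m : Fin d → ℤ) : japPow (s + t) m = japPow s m * japPow t m :=
  Real.rpow_add (one_pos.trans_le (one_le_jap m)) s t

theorem japPow_half_sq (s : ℝ) (m : Fin d → ℤ) : japPow (s / 2) m ^ 2 = japPow s m := by
  rw [sq, ← japPow_add, add_halves]

theorem japPow_le_japPow {s t : ℝ} (hst : s ≤ t) (m : Fin d → ℤ) : japPow s m ≤ japPow t m :=
  Real.rpow_le_rpow_of_exponent_le (one_le_jap m) hst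

theorem japPow_add_le {s : ℝ} (hs : 0 ≤ s) (x y : Fin d → ℤ) :
    japPow s (x + y) ≤ 2 ^ s * japPow s x * japPow s y := by
  have hx : 0 ≤ jap x := zero_le_one.trans (one_le_jap x)
  have hy : 0 ≤ jap y := zero_le_one.trans (one_le_jap y)
  calc jap (x + y) ^ s ≤ (2 * jap x * jap y) ^ s :=
        Real.rpow_le_rpow (zero_le_one.trans (one_le_jap _)) (jap_add_le x y) hs
    _ = 2 ^ s * jap x ^ s * jap y ^ s := by
        rw [Real.mul_rpow (by positivity) hy, Real.mul_rpow zero_le_two hx]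

theorem weightedBound_id {s t : ℝ} (hst : s ≤ t) :
    WeightedBound (japPow (d := d) t) (japPow s) 1 fun u => u :=
  .comp_injective (japPow_pos t) (japPow_pos s) Function.injective_id zero_le_one fun x => by
    simpa using japPow_le_japPow hst x

theorem weightedBound_translate {s t : ℝ} (hs : 0 ≤ s) (hst : s ≤ t) (m : Fin d → ℤ) :
    WeightedBound (japPow t) (japPow s) (2 ^ s * japPow s m) fun u x => u (x - m) := by
  have hm := japPow_pos s m
  refine .comp_injective (japPow_pos t) (japPow_pos s) (sub_left_injective (b := m))
    (by positivity) fun x => ?_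
  calc japPow s x = japPow s (m + (x - m)) := by rw [add_sub_cancel]
    _ ≤ 2 ^ s * japPow s m * japPow s (x - m) := japPow_add_le hs m (x - m)
    _ ≤ 2 ^ s * japPow s m * japPow t (x - m) := by gcongr; exact japPow_le_japPow hst _

theorem exists_weightedBound_lap {s : ℝ} (hs : 0 ≤ s) :
    ∃ C, WeightedBound (japPow (d := d) s) (japPow s) C lap := by
  have htranslate (m : Fin d → ℤ) := weightedBound_translate hs le_rfl m
  have hterm (j : Fin d) := ((htranslate (-Pi.single j 1)).add (htranslate (Pi.single j 1))).add
    ((weightedBound_id le_rfl).const_smul (-2))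
  refine ⟨_, (WeightedBound.tsum hterm (hasSum_fintype _).summable).congr fun u x => ?_⟩
  rw [tsum_fintype]
  exact Finset.sum_congr rfl fun j _ => by simp [sub_eq_add_neg]

theorem lpn_two_coe (U : L2 (Fin d → ℤ)) : lpn 2 U = ‖U‖ₑ := by
  have hsum : Summable fun m => ‖U m‖ ^ (2 : ℝ≥0∞).toReal :=
    (lp.memℓp U).summable (by norm_num)
  rw [lpn, if_neg (by norm_num), ← ofReal_norm, lp.norm_eq_tsum_rpow (by norm_num),
    ← ENNReal.ofReal_rpow_of_nonneg (tsum_nonneg fun m => by positivity) (by norm_num),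
    ENNReal.ofReal_tsum_of_nonneg (fun m => by positivity) hsum]
  congr! 3 with m
  rw [← ENNReal.ofReal_rpow_of_nonneg (norm_nonneg _) (by norm_num), ofReal_norm]
  rfl

theorem memℓp_two_of_lpn_lt_top {f : (Fin d → ℤ) → ℂ} (hf : lpn 2 f < ⊤) : Memℓp f 2 := by
  rw [lpn, if_neg (by norm_num), ENNReal.rpow_lt_top_iff_of_pos (by norm_num)] at hf
  refine memℓp_gen ((ENNReal.summable_toReal hf.ne).congr fun m => ?_)
  rw [← ENNReal.toReal_rpow, ENNReal.coe_toReal, coe_nnnorm]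

variable {k : ℕ}

theorem w2_unweight (U : L2 (Fin d → ℤ)) : w2 k (unweight (japPow k) U) = ‖U‖ₑ := by
  rw [← lpn_two_coe, w2]
  congr 1 with m
  rw [← japPow_natCast, mul_unweight_apply (japPow_pos k)]

theorem w2_lt_top_iff {f : (Fin d → ℤ) → ℂ} :
    w2 k f < ⊤ ↔ ∃ U, unweight (japPow k) U = f := by
  refine ⟨fun hf => ⟨⟨_, memℓp_two_of_lpn_lt_top hf⟩, funext fun m => ?_⟩, ?_⟩
  · have hm : ((jap m ^ k : ℝ) : ℂ) ≠ 0 := by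
      rw [← japPow_natCast]; exact Complex.ofReal_ne_zero.2 (japPow_pos _ m).ne'
    rw [unweight_apply, japPow_natCast]
    exact mul_div_cancel_left₀ _ hm
  · rintro ⟨U, rfl⟩
    rw [w2_unweight]
    exact enorm_lt_top

end JapaneseBracket

section DerivativeKernel

variable {d : ℕ} (j : Fin d)

theorem phi_single (a : ℤ) :
    phi d j (Pi.single j a) = -4 * Complex.I / (Real.pi * (4 * (a : ℂ) ^ 2 - 1)) := by
  have hsupp : ∀ i, i ≠ j → (Pi.single j a : Fin d → ℤ) i = 0 := fun i hi => by
    rw [Pi.single_eq_of_ne hi]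
  rw [phi, if_pos hsupp, Pi.single_eq_same]

theorem phi_eq_zero_of_notMem_range {m : Fin d → ℤ} (hm : m ∉ Set.range (Pi.single j)) :
    phi d j m = 0 :=
  if_neg fun h => hm ⟨m j, funext fun i => by
    obtain rfl | hi := eq_or_ne i j
    · exact Pi.single_eq_same i _
    · rw [Pi.single_eq_of_ne hi, h i hi]⟩

theorem jap_single_sq (a : ℤ) : jap (Pi.single j a : Fin d → ℤ) ^ 2 = 1 + (a : ℝ) ^ 2 := by
  rw [jap_sq, Finset.sum_eq_single j (fun i _ hi => by simp [hi]) (by simp), Pi.single_eq_same]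

theorem norm_phi_single_le (a : ℤ) :
    ‖phi d j (Pi.single j a)‖ ≤ 4 / Real.pi * japPow (-2) (Pi.single j a : Fin d → ℤ) := by
  have hden : 1 + (a : ℝ) ^ 2 ≤ |4 * (a : ℝ) ^ 2 - 1| := by
    obtain rfl | ha := eq_or_ne a 0
    · norm_num
    · have ha1 : 1 ≤ (a : ℝ) ^ 2 :=
        (one_le_sq_iff_one_le_abs _).2 (by exact_mod_cast Int.one_le_abs ha)
      exact le_abs.2 (Or.inl (by linarith))
  have hnorm : ‖phi d j (Pi.single j a)‖ = 4 / Real.pi * |4 * (a : ℝ) ^ 2 - 1|⁻¹ := by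
    have hcast : (Real.pi * (4 * (a : ℂ) ^ 2 - 1) : ℂ) =
        ((Real.pi * (4 * (a : ℝ) ^ 2 - 1) : ℝ) : ℂ) := by norm_cast
    rw [phi_single, hcast, norm_div, norm_mul, norm_neg, Complex.norm_ofNat, Complex.norm_I,
      mul_one, Complex.norm_real, norm_mul, Real.norm_of_nonneg Real.pi_pos.le, Real.norm_eq_abs,
      div_mul_eq_div_div, div_eq_mul_inv _ |_|]
  have hjap : japPow (-2) (Pi.single j a : Fin d → ℤ) = (1 + (a : ℝ) ^ 2)⁻¹ := by
    rw [← jap_single_sq j, ← Real.rpow_natCast,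
      ← Real.rpow_neg (zero_le_one.trans (one_le_jap _))]
    rfl
  rw [hnorm, hjap]
  gcongr

theorem summable_japPow_single {s : ℝ} (hs : s < -1) :
    Summable fun a : ℤ => japPow s (Pi.single j a : Fin d → ℤ) := by
  refine .of_norm_bounded_eventually (Real.summable_abs_int_rpow (b := -s) (by linarith)) ?_
  filter_upwards [(Set.finite_singleton (0 : ℤ)).compl_mem_cofinite] with a ha
  have ha0 : 0 < |(a : ℝ)| := abs_pos.2 (Int.cast_ne_zero.2 ha)
  have hle : |(a : ℝ)| ≤ jap (Pi.single j a : Fin d → ℤ) :=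
    abs_le_of_sq_le_sq (by linarith [jap_single_sq j a]) (zero_le_one.trans (one_le_jap _))
  rw [neg_neg, Real.norm_of_nonneg (japPow_pos _ _).le]
  exact Real.rpow_le_rpow_of_nonpos ha0 hle (by linarith)

theorem summable_norm_phi_mul_japPow {s : ℝ} (hs : s < 1) :
    Summable fun m => ‖phi d j m‖ * japPow s m := by
  refine ((Pi.single_injective j).summable_iff fun m hm => ?_).1 <|
    .of_nonneg_of_le (fun a => mul_nonneg (norm_nonneg _) (japPow_pos _ _).le) (fun a => ?_)
      ((summable_japPow_single j (s := -2 + s) (by linarith)).mul_left (4 / Real.pi))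
  · rw [phi_eq_zero_of_notMem_range j hm, norm_zero, zero_mul]
  · rw [Function.comp_apply, japPow_add, ← mul_assoc]
    exact mul_le_mul_of_nonneg_right (norm_phi_single_le j a) (japPow_pos _ _).le

theorem pd_apply (u : (Fin d → ℤ) → ℂ) (x : Fin d → ℤ) :
    pd j u x = ∑' m, phi d j m * u (x - m) := by
  rw [pd, dconv, ← (Equiv.subLeft x).tsum_eq]
  simp [mul_comm]

theorem exists_weightedBound_pd {s t : ℝ} (hs : 0 ≤ s) (hst : s ≤ t) (hs1 : s < 1) :
    ∃ C, WeightedBound (japPow t) (japPow s) C (pd j) := by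
  have hterm (m : Fin d → ℤ) := (weightedBound_translate hs hst m).const_smul (phi d j m)
  have hsum : Summable fun m => ‖phi d j m‖ * (2 ^ s * japPow s m) := by
    simpa only [mul_left_comm] using (summable_norm_phi_mul_japPow j hs1).mul_left (2 ^ s)
  exact ⟨_, (WeightedBound.tsum hterm hsum).congr fun u x => (pd_apply j u x).symm⟩

end DerivativeKernel

section Curves

variable {d k : ℕ} {S : Set ℝ} {u u1 u2 : ℝ → (Fin d → ℤ) → ℂ} {U U1 U2 : ℝ → L2 (Fin d → ℤ)}

theorem contW_iff_continuousOn (h : S.EqOn u fun t => unweight (japPow k) (U t)) :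
    ContW k S u ↔ ContinuousOn U S := by
  refine forall₂_congr fun t ht => ?_
  rw [ContinuousWithinAt, tendsto_iff_edist_tendsto_0]
  refine tendsto_congr' ?_
  filter_upwards [self_mem_nhdsWithin] with s hs
  rw [edist_eq_enorm_sub, ← w2_unweight (k := k), map_sub, h hs, h ht]
  rfl

theorem derivW_iff_hasDerivWithinAt (h : S.EqOn u fun t => unweight (japPow k) (U t))
    (h1 : S.EqOn u1 fun t => unweight (japPow k) (U1 t)) :
    DerivW k S u u1 ↔ ∀ t ∈ S, HasDerivWithinAt U (U1 t) S t := by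
  refine forall₂_congr fun t ht => ?_
  rw [hasDerivWithinAt_iff_tendsto_slope, tendsto_iff_edist_tendsto_0]
  refine tendsto_congr' ?_
  filter_upwards [self_mem_nhdsWithin] with s hs
  rw [edist_eq_enorm_sub, ← w2_unweight (k := k), map_sub, slope_def_module,
    LinearMap.map_smul_of_tower, map_sub, h hs.1, h ht, h1 ht]
  rfl

theorem isC2_unweight (hU : ∀ t ∈ S, HasDerivWithinAt U (U1 t) S t)
    (hU1 : ∀ t ∈ S, HasDerivWithinAt U1 (U2 t) S t) (hU2 : ContinuousOn U2 S) :
    IsC2 k S (fun t => unweight (japPow k) (U t)) (fun t => unweight (japPow k) (U1 t))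
      fun t => unweight (japPow k) (U2 t) where
  mem0 _ _ := w2_lt_top_iff.2 ⟨_, rfl⟩
  mem1 _ _ := w2_lt_top_iff.2 ⟨_, rfl⟩
  mem2 _ _ := w2_lt_top_iff.2 ⟨_, rfl⟩
  cont0 := (contW_iff_continuousOn fun _ _ => rfl).2 fun t ht => (hU t ht).continuousWithinAt
  cont1 := (contW_iff_continuousOn fun _ _ => rfl).2 fun t ht => (hU1 t ht).continuousWithinAt
  cont2 := (contW_iff_continuousOn fun _ _ => rfl).2 hU2
  hder1 := (derivW_iff_hasDerivWithinAt (fun _ _ => rfl) fun _ _ => rfl).2 hU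
  hder2 := (derivW_iff_hasDerivWithinAt (fun _ _ => rfl) fun _ _ => rfl).2 hU1

theorem exists_eqOn_unweight (h : ∀ t ∈ S, w2 k (u t) < ⊤) :
    ∃ U : ℝ → L2 (Fin d → ℤ), S.EqOn u fun t => unweight (japPow k) (U t) := by
  choose! U hU using fun t ht => w2_lt_top_iff.1 (h t ht)
  exact ⟨U, fun t ht => (hU t ht).symm⟩

theorem IsC2.exists_hasDerivWithinAt (h : IsC2 k S u u1 u2) :
    ∃ U U1 U2 : ℝ → L2 (Fin d → ℤ),
      (S.EqOn u fun t => unweight (japPow k) (U t)) ∧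
      (S.EqOn u1 fun t => unweight (japPow k) (U1 t)) ∧
      (S.EqOn u2 fun t => unweight (japPow k) (U2 t)) ∧
      (∀ t ∈ S, HasDerivWithinAt U (U1 t) S t) ∧ ∀ t ∈ S, HasDerivWithinAt U1 (U2 t) S t := by
  obtain ⟨U, hU⟩ := exists_eqOn_unweight h.mem0
  obtain ⟨U1, hU1⟩ := exists_eqOn_unweight h.mem1
  obtain ⟨U2, hU2⟩ := exists_eqOn_unweight h.mem2
  exact ⟨U, U1, U2, hU, hU1, hU2, (derivW_iff_hasDerivWithinAt hU hU1).1 h.hder1,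
    (derivW_iff_hasDerivWithinAt hU1 hU2).1 h.hder2⟩

end Curves

section SecondOrderEquation

variable {d k : ℕ} {M : ((Fin d → ℤ) → ℂ) → ((Fin d → ℤ) → ℂ) → (Fin d → ℤ) → ℂ}
  {f g : (Fin d → ℤ) → ℂ} {S : Set ℝ} {u u1 u2 : ℝ → (Fin d → ℤ) → ℂ}

/-- `u` is a solution in `C²(S; ℓ^{2,k})` of `∂ₜ²u = M(u, ∂ₜu)` with `u(0) = f` and `∂ₜu(0) = g`;
as in `SolQt` and `SolQj`, the curves `u1` and `u2` stand for `∂ₜu` and `∂ₜ²u`. -/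
def SolSecondOrder (k : ℕ)
    (M : ((Fin d → ℤ) → ℂ) → ((Fin d → ℤ) → ℂ) → (Fin d → ℤ) → ℂ)
    (f g : (Fin d → ℤ) → ℂ) (S : Set ℝ) (u u1 u2 : ℝ → (Fin d → ℤ) → ℂ) : Prop :=
  IsC2 k S u u1 u2 ∧ (∀ t ∈ S, u2 t = M (u t) (u1 t)) ∧ u 0 = f ∧ u1 0 = g

theorem solQt_iff_solSecondOrder : SolQt d k f g S u u1 u2 ↔
    SolSecondOrder k (fun u v x => lap u x + ((‖v x‖ ^ 2 : ℝ) : ℂ)) f g S u u1 u2 := by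
  simp only [sub_eq_iff_eq_add', SolQt, SolSecondOrder, funext_iff]

theorem solQj_iff_solSecondOrder {j : Fin d} : SolQj d k j f g S u u1 u2 ↔
    SolSecondOrder k (fun u _ x => lap u x + ((‖pd j u x‖ ^ 2 : ℝ) : ℂ)) f g S u u1 u2 := by
  simp only [sub_eq_iff_eq_add', SolQj, SolSecondOrder, funext_iff]

/-- `(u, v) ↦ M(u, v)` is a locally Lipschitz map `ℓ²(w) × ℓ²(w) → ℓ²(w)`, read through the
isometry `unweight w` of `ℓ²` with `ℓ²(w)`. -/
def LocallyLipschitzOnWeighted {ι : Type*} (w : ι → ℝ) (M : (ι → ℂ) → (ι → ℂ) → ι → ℂ) : Prop :=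
  ∃ G : L2 ι × L2 ι → L2 ι, LocallyLipschitz G ∧
    ∀ p, unweight w (G p) = M (unweight w p.1) (unweight w p.2)

/-- The vector field of the first-order system `∂ₜ(u, v) = (v, G(u, v))` equivalent to
`∂ₜ²u = G(u, ∂ₜu)`. -/
def secondOrderField {E : Type*} (G : E × E → E) (p : E × E) : E × E := (p.2, G p)

theorem locallyLipschitz_secondOrderField {E : Type*} [PseudoEMetricSpace E] {G : E × E → E}
    (hG : LocallyLipschitz G) : LocallyLipschitz (secondOrderField G) :=
  LipschitzWith.prod_snd.locallyLipschitz.prodMk hG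

section IntegralCurve

variable {G : L2 (Fin d → ℤ) × L2 (Fin d → ℤ) → L2 (Fin d → ℤ)}

theorem solSecondOrder_of_isIntegralCurveOn (hG : Continuous G)
    (hGM : ∀ p, unweight (japPow k) (G p) = M (unweight (japPow k) p.1) (unweight (japPow k) p.2))
    {γ : ℝ → L2 (Fin d → ℤ) × L2 (Fin d → ℤ)}
    (hγ : IsIntegralCurveOn γ (fun _ => secondOrderField G) S) :
    SolSecondOrder k M (unweight (japPow k) (γ 0).1) (unweight (japPow k) (γ 0).2) S
      (fun t => unweight (japPow k) (γ t).1) (fun t => unweight (japPow k) (γ t).2)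
      fun t => unweight (japPow k) (G (γ t)) :=
  ⟨isC2_unweight (fun t ht => (hγ t ht).fst) (fun t ht => (hγ t ht).snd)
    (hG.comp_continuousOn hγ.continuousOn), fun t _ => hGM (γ t), rfl, rfl⟩

theorem SolSecondOrder.exists_isIntegralCurveOn
    (hGM : ∀ p, unweight (japPow k) (G p) = M (unweight (japPow k) p.1) (unweight (japPow k) p.2))
    (h : SolSecondOrder k M f g S u u1 u2) :
    ∃ γ, IsIntegralCurveOn γ (fun _ => secondOrderField G) S ∧
      (S.EqOn u fun t => unweight (japPow k) (γ t).1) ∧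
      S.EqOn u1 fun t => unweight (japPow k) (γ t).2 := by
  obtain ⟨hC2, hu2, -, -⟩ := h
  obtain ⟨U, U1, U2, hU, hU1, hU2, hder, hder1⟩ := hC2.exists_hasDerivWithinAt
  have hU2G : ∀ t ∈ S, U2 t = G (U t, U1 t) := fun t ht =>
    unweight_injective (japPow_pos k) <|
      calc unweight (japPow k) (U2 t) = u2 t := (hU2 ht).symm
        _ = M (u t) (u1 t) := hu2 t ht
        _ = unweight (japPow k) (G (U t, U1 t)) := by rw [hU ht, hU1 ht, hGM]
  refine ⟨fun t => (U t, U1 t), fun t ht => ?_, hU, hU1⟩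
  simpa only [secondOrderField, hU2G t ht] using (hder t ht).prodMk (hder1 t ht)

end IntegralCurve

theorem LocallyLipschitzOnWeighted.exists_unique_solSecondOrder
    (hM : LocallyLipschitzOnWeighted (japPow k) M) (hf : w2 k f < ⊤) (hg : w2 k g < ⊤) :
    ∃ T : ℝ, 0 < T ∧ ∃ u u1 u2, SolSecondOrder k M f g (Set.Icc 0 T) u u1 u2 ∧
      ∀ v v1 v2, SolSecondOrder k M f g (Set.Icc 0 T) v v1 v2 →
        ∀ t ∈ Set.Icc (0 : ℝ) T, ∀ x, v t x = u t x := by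
  obtain ⟨f, rfl⟩ := w2_lt_top_iff.1 hf
  obtain ⟨g, rfl⟩ := w2_lt_top_iff.1 hg
  obtain ⟨G, hG, hGM⟩ := hM
  have hfield := locallyLipschitz_secondOrderField hG
  obtain ⟨T, hT, γ, hγ0, hγ⟩ := exists_isIntegralCurveOn_Icc_of_locallyLipschitz hfield (f, g)
  have hsol := solSecondOrder_of_isIntegralCurveOn hG.continuous hGM hγ
  rw [hγ0] at hsol
  refine ⟨T, hT, _, _, _, hsol, fun v v1 v2 hv t ht x => ?_⟩
  obtain ⟨β, hβ, hvβ, hv1β⟩ := hv.exists_isIntegralCurveOn hGM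
  obtain ⟨-, -, hv0, hv10⟩ := hv
  have h0 : (0 : ℝ) ∈ Set.Icc 0 T := ⟨le_rfl, hT.le⟩
  have hinj := unweight_injective (japPow_pos (d := d) k)
  have hβ0 : β 0 = γ 0 := by
    rw [hγ0]
    exact Prod.ext (hinj ((hvβ h0).symm.trans hv0)) (hinj ((hv1β h0).symm.trans hv10))
  have hβγ := eqOn_Icc_of_isIntegralCurveOn_of_locallyLipschitz hfield hβ hγ hβ0
  simp only [hvβ ht, hβγ ht]

end SecondOrderEquation

section QuadraticNonlinearities

theorem LocallyLipschitzOnWeighted.lap_add {d k : ℕ}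
    {N : ((Fin d → ℤ) → ℂ) → ((Fin d → ℤ) → ℂ) → (Fin d → ℤ) → ℂ}
    (hN : LocallyLipschitzOnWeighted (japPow k) N) :
    LocallyLipschitzOnWeighted (japPow k) fun u v x => lap u x + N u v x := by
  obtain ⟨Q, hQ, hQN⟩ := hN
  obtain ⟨_, L, -, hL⟩ := exists_weightedBound_lap (d := d) k.cast_nonneg
  refine ⟨fun p => L p.1 + Q p,
    (L.lipschitz.locallyLipschitz.comp LipschitzWith.prod_fst.locallyLipschitz).add hQ,
    fun p => ?_⟩
  rw [map_add, hL, hQN]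
  rfl

theorem locallyLipschitzOnWeighted_norm_sq_snd (d k : ℕ) :
    LocallyLipschitzOnWeighted (japPow (d := d) k) fun _ v x => ((‖v x‖ ^ 2 : ℝ) : ℂ) := by
  have hk : (k / 2 : ℝ) ≤ k := half_le_self k.cast_nonneg
  obtain ⟨Q, hQ, hQN⟩ := (weightedBound_id hk).exists_locallyLipschitz_norm_sq (japPow_half_sq k)
  exact ⟨fun p => Q p.2, hQ.comp LipschitzWith.prod_snd.locallyLipschitz, fun p => hQN p.2⟩

theorem locallyLipschitzOnWeighted_norm_sq_pd {d k : ℕ} (hk : k ≤ 1) (j : Fin d) :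
    LocallyLipschitzOnWeighted (japPow k) fun u _ x => ((‖pd j u x‖ ^ 2 : ℝ) : ℂ) := by
  have hk0 : (0 : ℝ) ≤ k / 2 := by positivity
  have hkk : (k / 2 : ℝ) ≤ k := half_le_self k.cast_nonneg
  have hk1 : (k / 2 : ℝ) < 1 := by
    have : (k : ℝ) ≤ 1 := by exact_mod_cast hk
    linarith
  obtain ⟨_, hpd⟩ := exists_weightedBound_pd j hk0 hkk hk1
  obtain ⟨Q, hQ, hQN⟩ := hpd.exists_locallyLipschitz_norm_sq (japPow_half_sq k)
  exact ⟨fun p => Q p.1, hQ.comp LipschitzWith.prod_fst.locallyLipschitz, fun p => hQN p.1⟩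

end QuadraticNonlinearities

theorem stmt18_general (d k : ℕ) (f g : (Fin d → ℤ) → ℂ) (hf : w2 k f < ⊤) (hg : w2 k g < ⊤) :
    (∃ T : ℝ, 0 < T ∧
      ∃ u u1 u2, SolQt d k f g (Set.Icc 0 T) u u1 u2 ∧
        ∀ v v1 v2, SolQt d k f g (Set.Icc 0 T) v v1 v2 →
          ∀ t ∈ Set.Icc (0 : ℝ) T, ∀ x, v t x = u t x) ∧
    (k ≤ 1 → ∀ j : Fin d, ∃ T : ℝ, 0 < T ∧
      ∃ u u1 u2, SolQj d k j f g (Set.Icc 0 T) u u1 u2 ∧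
        ∀ v v1 v2, SolQj d k j f g (Set.Icc 0 T) v v1 v2 →
          ∀ t ∈ Set.Icc (0 : ℝ) T, ∀ x, v t x = u t x) := by
  simp only [solQt_iff_solSecondOrder, solQj_iff_solSecondOrder]
  exact ⟨(locallyLipschitzOnWeighted_norm_sq_snd d k).lap_add.exists_unique_solSecondOrder hf hg,
    fun hk j =>
      (locallyLipschitzOnWeighted_norm_sq_pd hk j).lap_add.exists_unique_solSecondOrder hf hg⟩

/-- local well-posedness of the discrete wave equation with quadratic
derivative nonlinearities `|∂ₜu|²` and `|∂ⱼu|²`: for each nonlinearity there exists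
`T > 0` and a unique classical solution on `[0,T]`. -/
theorem stmt18 (d : ℕ) (hd : 0 < d) (k : ℕ) (hk : k = 0 ∨ k = 1)
    (f g : (Fin d → ℤ) → ℂ) (hf : w2 k f < ⊤) (hg : w2 k g < ⊤) :
    (∃ T : ℝ, 0 < T ∧
      ∃ u u1 u2, SolQt d k f g (Set.Icc 0 T) u u1 u2 ∧
        ∀ v v1 v2, SolQt d k f g (Set.Icc 0 T) v v1 v2 →
          ∀ t ∈ Set.Icc (0 : ℝ) T, ∀ x, v t x = u t x) ∧
    ∀ j : Fin d, ∃ T : ℝ, 0 < T ∧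
      ∃ u u1 u2, SolQj d k j f g (Set.Icc 0 T) u u1 u2 ∧
        ∀ v v1 v2, SolQj d k j f g (Set.Icc 0 T) v v1 v2 →
          ∀ t ∈ Set.Icc (0 : ℝ) T, ∀ x, v t x = u t x :=
  (stmt18_general d k f g hf hg).imp_right fun h => h (by omega)
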